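/- For any even integer p ≥ 2, the equation dη̄/dū = 1/(η̄ + ū^p) has a solution η̄₀(ū) defined for all ū ≤ 0 satisfying −ū^p < η̄₀(ū) < −ū^p − K/ū^{p−1} for all ū < 0, for some constant K > 1/p; moreover η̄₀(ū) = −ū^p − (1/p) ū^{1−p} + O(ū^{2−3p}) as ū → −∞, and such a solution with η̄₀(ū) + ū^p → 0 as ū → −∞ is unique. -/

import Mathlib

open Set Filter Topology

lemma fence_of (w w' B B' : ℝ → ℝ) (a b : ℝ)
    (hw : ∀ u ∈ Icc a b, HasDerivWithinAt w (w' u) (Icc a b) u)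
    (hB : ∀ u ∈ Icc a b, HasDerivWithinAt B (B' u) (Icc a b) u)
    (ha : B a ≤ w a) (h : ∀ u ∈ Icc a b, B u = w u → B' u < w' u) :
    ∀ u ∈ Icc a b, B u ≤ w u := by
  intro u hu
  refine image_le_of_deriv_right_lt_deriv_boundary' (f' := B') (B' := w')
    (fun x hx => (hB x hx).continuousWithinAt) ?_ ha
    (fun x hx => (hw x hx).continuousWithinAt) ?_ ?_ hu
  · intro x hx
    exact (hB x (Ico_subset_Icc_self hx)).mono_of_mem_nhdsWithin (Icc_mem_nhdsGE_of_mem hx)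
  · intro x hx
    exact (hw x (Ico_subset_Icc_self hx)).mono_of_mem_nhdsWithin (Icc_mem_nhdsGE_of_mem hx)
  · intro x hx
    exact h x (Ico_subset_Icc_self hx)

lemma contr (F : ℝ → ℝ) (w v : ℝ → ℝ) (a b : ℝ)
    (hw : ∀ u ∈ Icc a b, HasDerivWithinAt w (1 / w u + F u) (Icc a b) u)
    (hv : ∀ u ∈ Icc a b, HasDerivWithinAt v (1 / v u + F u) (Icc a b) u)
    (hw0 : ∀ u ∈ Icc a b, 0 < w u) (hv0 : ∀ u ∈ Icc a b, 0 < v u) :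
    ∀ u ∈ Icc a b, |w u - v u| ≤ |w a - v a| := by
  intro u hu
  have hd : ∀ x ∈ Icc a b, HasDerivWithinAt (fun x => (w x - v x)^2)
      (2 * (w x - v x) * (1 / w x - 1 / v x)) (Icc a b) x := by
    intro x hx
    have := ((hw x hx).sub (hv x hx)).pow 2
    refine (this.congr_deriv ?_)
    simp
  have hA : AntitoneOn (fun x => (w x - v x)^2) (Icc a b) := by
    refine antitoneOn_of_hasDerivWithinAt_nonpos (convex_Icc a b)
      (fun x hx => (hd x hx).continuousWithinAt)
      (fun x hx => (hd x (interior_subset hx)).mono interior_subset) ?_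
    intro x hx
    have h1 := hw0 x (interior_subset hx)
    have h2 := hv0 x (interior_subset hx)
    have : 2 * (w x - v x) * (1 / w x - 1 / v x) = -(2 * (w x - v x)^2 / (w x * v x)) := by
      field_simp
      ring
    rw [this]
    have : 0 ≤ 2 * (w x - v x)^2 / (w x * v x) := by positivity
    linarith
  have := hA (left_mem_Icc.2 (hu.1.trans hu.2)) hu hu.1
  exact sq_le_sq.1 this

/-- derivative of `1/(c (d-u)^k)` -/
lemma hasDeriv_inv_pow (c d : ℝ) (k : ℕ) (u : ℝ) (hc : 0 < c) (hu : u < d) :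
    HasDerivAt (fun u => 1 / (c * (d - u)^k)) (k / (c * (d - u)^(k+1))) u := by
  have hs : 0 < d - u := by linarith
  have h1 : HasDerivAt (fun u => c * (d - u)^k) (c * (k * (d-u)^(k-1) * (-1))) u := by
    have := (((hasDerivAt_id u).const_sub d).pow k).const_mul c
    simpa using this
  have h2 := h1.inv (by positivity)
  have h3 : (fun u => 1 / (c * (d - u)^k)) = (fun u => c * (d - u)^k)⁻¹ := by
    ext x; simp
  rw [h3]
  refine h2.congr_deriv ?_
  rcases k with _ | k
  · simp
  · simp only [Nat.add_sub_cancel]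
    field_simp
    ring

lemma exists_trunc (m : ℕ) (δ x₀ n : ℝ) (hδ : 0 < δ) (hn : 1 ≤ n) :
    ∃ w : ℝ → ℝ, w (-n) = x₀ ∧ ∀ u ∈ Icc (-n) 1,
      HasDerivWithinAt w (1 / max (w u) δ + (m+1) * u^m) (Icc (-n) 1) u := by
  have h0 : (-n) ∈ Icc (-n) (1:ℝ) := ⟨le_rfl, by linarith⟩
  have hL : 0 ≤ 1/δ + (m+1) * n^m := by positivity
  have hP : IsPicardLindelof (fun u w => 1 / max w δ + (m+1) * u^m) (tmin := -n) (tmax := 1)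
      ⟨-n, h0⟩ x₀ (Real.toNNReal ((1/δ + (m+1) * n^m) * (1 + n))) 0
      (Real.toNNReal (1/δ + (m+1) * n^m)) (Real.toNNReal (1/δ^2)) := by
    constructor
    · intro t ht
      apply LipschitzOnWith.of_dist_le_mul
      intro x _ y _
      rw [Real.coe_toNNReal _ (by positivity), Real.dist_eq, Real.dist_eq]
      have hx : δ ≤ max x δ := le_max_right _ _
      have hy : δ ≤ max y δ := le_max_right _ _
      have hx0 : 0 < max x δ := by linarith
      have hy0 : 0 < max y δ := by linarith
      have e : (1 / max x δ + (m+1) * t^m) - (1 / max y δ + (m+1) * t^m)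
        = (max y δ - max x δ) / (max x δ * max y δ) := by field_simp; ring
      rw [e, abs_div, abs_of_pos (mul_pos hx0 hy0), div_eq_mul_one_div, mul_comm]
      have h1 : |max y δ - max x δ| ≤ |x - y| := by
        have := abs_max_sub_max_le_abs y x δ
        rwa [abs_sub_comm y x] at this
      have h2 : 1 / (max x δ * max y δ) ≤ 1 / δ^2 := by
        apply one_div_le_one_div_of_le (by positivity)
        nlinarith
      gcongr
    · intro x _
      fun_prop
    · intro t ht x _
      rw [Real.coe_toNNReal _ hL, Real.norm_eq_abs]
      have hx : δ ≤ max x δ := le_max_right _ _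
      have hx0 : 0 < max x δ := by linarith
      have ht' : |t| ≤ n := abs_le.2 ⟨ht.1, by linarith [ht.2]⟩
      refine (abs_add_le _ _).trans ?_
      rw [abs_of_pos (by positivity : 0 < 1 / max x δ), abs_mul, abs_pow, abs_of_pos (by positivity : (0:ℝ) < m+1)]
      gcongr
    · rw [Real.coe_toNNReal _ hL, Real.coe_toNNReal _ (by positivity)]
      have : max (1 - (-n)) (-n - -n) = 1 + n := by
        rw [max_eq_left] <;> linarith
      simp only [this]
      simp
  obtain ⟨w, h1, h2⟩ := hP.exists_eq_forall_mem_Icc_hasDerivWithinAt₀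
  exact ⟨w, h1, h2⟩

/-- truncated-start solutions -/
lemma exists_n (m : ℕ) (hm : Odd m) (n : ℝ) (hn : 1 ≤ n) :
    ∃ w : ℝ → ℝ, (∀ u ∈ Icc (-n) 1,
      HasDerivWithinAt w (1 / w u + (m+1) * u^m) (Icc (-n) 1) u) ∧
      (∀ u ∈ Icc (-n) 1, 1 / (2 * (m+1) * (2-u)^m) ≤ w u) ∧
      (∀ u ∈ Ico (-n) 0, w u ≤ 1 / ((m+1) * (0-u)^m)) ∧
      (∀ u ∈ Icc (-n) (-1), 1 / ((m+1) * (0-u)^m) - 1 / ((m+1) * (0-u)^(3*m+1)) ≤ w u) := by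
  have hm1 : (1:ℝ) ≤ m := by exact_mod_cast hm.pos
  obtain ⟨w, hw0, hw⟩ := exists_trunc m (1 / (2 * (m+1) * (2-(-n))^m)) (1 / ((m+1) * n^m)) n
    (by have : 0 < 2 - (-n) := by linarith
        positivity) hn
  set δ := 1 / (2 * (m+1) * (2-(-n))^m) with hδ
  have hlow : ∀ u ∈ Icc (-n) 1, 1 / (2 * (m+1) * (2-u)^m) ≤ w u := by
    refine fence_of w _ (fun u => 1 / (2 * (m+1) * (2-u)^m)) _ _ _ hw
      (fun u hu => (hasDeriv_inv_pow (2*(m+1)) 2 m u (by positivity) (by linarith [hu.2])).hasDerivWithinAt) ?_ ?_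
    · rw [hw0]
      apply one_div_le_one_div_of_le (by positivity)
      have : n^m ≤ (2 - -n)^m := by gcongr; linarith
      have h3 : 0 < n^m := by positivity
      nlinarith
    · intro u hu he
      have hs : 1 ≤ 2 - u := by linarith [hu.2]
      have hge : δ ≤ w u := by
        rw [← he, hδ]
        apply one_div_le_one_div_of_le (by positivity)
        have : 2 - u ≤ 2 - -n := by linarith [hu.1]
        gcongr
      rw [max_eq_left hge, ← he, one_div_one_div]
      have h1 : |u^m| ≤ (2-u)^m := by
        rw [abs_pow]
        gcongr
        rw [abs_le]; constructor <;> linarith [hu.2]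
      have h2 := (abs_le.1 h1).1
      have h3 : (1:ℝ) ≤ (2-u)^m := one_le_pow₀ hs
      have h4 : (1:ℝ) ≤ (2-u)^(m+1) := one_le_pow₀ hs
      have h5 : (m:ℝ) / (2 * (m+1) * (2-u)^(m+1)) < 1 := by
        rw [div_lt_one (by positivity)]
        nlinarith
      nlinarith
  have hw' : ∀ u ∈ Icc (-n) 1, HasDerivWithinAt w (1 / w u + (m+1) * u^m) (Icc (-n) 1) u := by
    intro u hu
    have hge : δ ≤ w u := by
      refine le_trans ?_ (hlow u hu)
      have : 0 < 2 - u := by linarith [hu.2]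
      rw [hδ]
      apply one_div_le_one_div_of_le (by positivity)
      have : 2 - u ≤ 2 - -n := by linarith [hu.1]
      gcongr
    have := hw u hu
    rwa [max_eq_left hge] at this
  have hpow : ∀ u : ℝ, u^m = - (0-u)^m := by
    intro u; rw [zero_sub, hm.neg_pow]; ring
  refine ⟨w, hw', hlow, ?_, ?_⟩
  · intro v hv
    have hsub : Icc (-n) v ⊆ Icc (-n) 1 := Icc_subset_Icc_right (by linarith [hv.2])
    refine fence_of (fun u => 1 / ((m+1) * (0-u)^m)) _ w _ (-n) v
      (fun u hu => (hasDeriv_inv_pow (m+1) 0 m u (by positivity) (by linarith [hu.2, hv.2])).hasDerivWithinAt)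
      (fun u hu => (hw' u (hsub hu)).mono hsub) ?_ ?_ v ⟨hv.1, le_rfl⟩
    · rw [hw0]; simp
    · intro u hu he
      have hs : 0 < 0 - u := by linarith [hu.2, hv.2]
      rw [he, one_div_one_div, hpow u]
      have : (0:ℝ) < (m:ℝ) / ((m+1) * (0-u)^(m+1)) := by positivity
      linarith
  · intro v hv
    have hsub : Icc (-n) v ⊆ Icc (-n) 1 := Icc_subset_Icc_right (by linarith [hv.2])
    refine fence_of w _ (fun u => 1 / ((m+1) * (0-u)^m) - 1 / ((m+1) * (0-u)^(3*m+1))) _ (-n) v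
      (fun u hu => (hw' u (hsub hu)).mono hsub)
      (fun u hu => ((hasDeriv_inv_pow (m+1) 0 m u (by positivity) (by linarith [hu.2, hv.2])).sub
        (hasDeriv_inv_pow (m+1) 0 (3*m+1) u (by positivity) (by linarith [hu.2, hv.2]))).hasDerivWithinAt)
       ?_ ?_ v ⟨hv.1, le_rfl⟩
    · rw [hw0]; simp only [zero_sub, neg_neg, sub_le_self_iff]; positivity
    · intro u hu he
      have hs1 : 1 ≤ 0 - u := by linarith [hu.2, hv.2]
      rw [hpow u]
      have hpos : 0 < w u := by
        refine lt_of_lt_of_le ?_ (hlow u (hsub hu))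
        have : 0 < 2 - u := by linarith
        positivity
      generalize 0 - u = s at *
      rw [← he] at hpos ⊢
      have hs : 0 < s := by linarith
      set x := 1 / s^(2*m+1) with hx
      have hx0 : 0 < x := by positivity
      have e1 : 1 / ((m+1) * s^m) - 1 / ((m+1) * s^(3*m+1)) = (1 - x) / ((m+1) * s^m) := by
        rw [hx]; field_simp; ring
      rw [e1] at hpos ⊢
      have h1x : 0 < 1 - x := by
        by_contra h
        have : (1 - x) / ((m+1) * s^m) ≤ 0 := div_nonpos_of_nonpos_of_nonneg (by linarith) (by positivity)
        linarith
      have e2 : 1 / ((1 - x) / ((m+1) * s^m)) + (m+1) * -s^m = (m+1) * s^m * (x / (1 - x)) := by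
        field_simp; ring
      rw [e2]
      have h2 : x ≤ x / (1-x) := by
        rw [le_div_iff₀ h1x]; nlinarith
      have h3 : (m+1) * s^m * x = (m+1) / s^(m+1) := by
        rw [hx]; field_simp; ring
      have h4 : (m+1) * s^m * x ≤ (m+1) * s^m * (x / (1 - x)) := by gcongr
      have h5 : 0 < ((3*m+1 : ℕ):ℝ) / ((m+1) * s^(3*m+1+1)) := by positivity
      have h6 : (m:ℝ) / ((m+1) * s^(m+1)) < (m+1) / s^(m+1) := by
        rw [div_lt_div_iff₀ (by positivity) (by positivity)]
        have : 0 < s^(m+1) := by positivity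
        nlinarith [mul_pos this (by positivity : (0:ℝ) < m)]
      linarith

lemma phi_le (m : ℕ) (hm : Odd m) (s : ℝ) (hs : 1 ≤ s) : 1 / ((m+1) * s^m) ≤ 1 / s := by
  apply one_div_le_one_div_of_le (by linarith)
  have h1 : s ≤ s^m := le_self_pow₀ hs hm.pos.ne'
  have h2 : (0:ℝ) ≤ m := by positivity
  nlinarith

lemma exists_sol (m : ℕ) (hm : Odd m) :
    ∃ w : ℝ → ℝ, (∀ u < 1, HasDerivAt w (1 / w u + (m+1) * u^m) u) ∧
      (∀ u < 1, 0 < w u) ∧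
      (∀ u < 0, w u ≤ 1 / ((m+1) * (0-u)^m)) ∧
      (∀ u ≤ -1, 1 / ((m+1) * (0-u)^m) - 1 / ((m+1) * (0-u)^(3*m+1)) ≤ w u) := by
  have hex := fun n : ℕ => exists_n m hm ((n:ℝ)+1) (by linarith [(Nat.cast_nonneg n : (0:ℝ) ≤ n)])
  choose W hW hlow hup hasy using hex
  have hBpos : ∀ u : ℝ, u ≤ 1 → 0 < 1 / (2 * ((m:ℝ)+1) * (2-u)^m) := by
    intro u hu
    have : 0 < 2 - u := by linarith
    positivity
  have key : ∀ n k : ℕ, n ≤ k → ∀ u ∈ Icc (-((n:ℝ)+1)) 1, |W k u - W n u| ≤ 1 / ((n:ℝ)+1) := by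
    intro n k hnk u hu
    have hn0 : (0:ℝ) ≤ n := Nat.cast_nonneg n
    have hnk' : (n:ℝ) ≤ k := by exact_mod_cast hnk
    have hsub : Icc (-((n:ℝ)+1)) 1 ⊆ Icc (-((k:ℝ)+1)) 1 := Icc_subset_Icc_left (by linarith)
    have := contr (fun u => (m+1) * u^m) (W k) (W n) (-((n:ℝ)+1)) 1
      (fun u hu => (hW k u (hsub hu)).mono hsub) (fun u hu => hW n u hu)
      (fun u hu => (hBpos u hu.2).trans_le (hlow k u (hsub hu)))
      (fun u hu => (hBpos u hu.2).trans_le (hlow n u hu)) u hu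
    refine this.trans ?_
    have hmem : (-((n:ℝ)+1)) ∈ Icc (-((n:ℝ)+1)) 1 := ⟨le_rfl, by linarith⟩
    have a1 := (hBpos _ hmem.2).trans_le (hlow k _ (hsub hmem))
    have a2 := (hBpos _ hmem.2).trans_le (hlow n _ hmem)
    have a3 := hup k (-((n:ℝ)+1)) ⟨by linarith, by linarith⟩
    have a4 := hup n (-((n:ℝ)+1)) ⟨by linarith, by linarith⟩
    have a5 := phi_le m hm (0 - -((n:ℝ)+1)) (by linarith)
    have a6 : (0 - -((n:ℝ)+1)) = n + 1 := by ring
    rw [a6] at a3 a4 a5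
    rw [abs_le]; constructor <;> linarith
  have hlim : ∀ u : ℝ, ∃ l, u ≤ 1 → Tendsto (fun n => W n u) atTop (𝓝 l) := by
    intro u
    by_cases hu : u ≤ 1
    · have : CauchySeq (fun n => W n u) := by
        rw [Metric.cauchySeq_iff']
        intro ε hε
        obtain ⟨N1, hN1⟩ := exists_nat_gt (-u)
        obtain ⟨N2, hN2⟩ := exists_nat_one_div_lt hε
        refine ⟨max N1 N2, fun k hk => ?_⟩
        rw [Real.dist_eq]
        have c1 : (N1:ℝ) ≤ (max N1 N2 : ℕ) := by exact_mod_cast le_max_left _ _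
        have c2 : (N2:ℝ) ≤ (max N1 N2 : ℕ) := by exact_mod_cast le_max_right _ _
        refine (key (max N1 N2) k hk u ⟨by linarith, hu⟩).trans_lt (lt_of_le_of_lt ?_ hN2)
        apply one_div_le_one_div_of_le (by positivity)
        linarith
      obtain ⟨l, hl⟩ := cauchySeq_tendsto_of_complete this
      exact ⟨l, fun _ => hl⟩
    · exact ⟨0, fun h => absurd h hu⟩
  choose w hw using hlim
  have hev : ∀ u : ℝ, ∀ᶠ n : ℕ in atTop, -((n:ℝ)+1) ≤ u := by
    intro u
    filter_upwards [tendsto_natCast_atTop_atTop.eventually_ge_atTop (-u)] with n hn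
    linarith
  have hwlow : ∀ u ≤ 1, 1 / (2 * (m+1) * (2-u)^m) ≤ w u := by
    intro u hu
    refine ge_of_tendsto (hw u hu) ?_
    filter_upwards [hev u] with n hn
    exact hlow n u ⟨hn, hu⟩
  have hclose : ∀ n : ℕ, ∀ u ∈ Icc (-((n:ℝ)+1)) 1, |w u - W n u| ≤ 1 / ((n:ℝ)+1) := by
    intro n u hu
    refine le_of_tendsto (((hw u hu.2).sub_const (W n u)).abs) ?_
    filter_upwards [eventually_ge_atTop n] with k hk
    exact key n k hk u hu
  refine ⟨w, ?_, fun u hu => (hBpos u hu.le).trans_le (hwlow u hu.le), ?_, ?_⟩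
  · intro u hu
    obtain ⟨N, hN⟩ := exists_nat_gt (-u)
    have hN0 : (0:ℝ) ≤ N := Nat.cast_nonneg N
    refine hasDerivAt_of_tendstoUniformlyOn (l := atTop) (f := W)
      (f' := fun n u => 1 / W n u + (m+1) * u^m) (g' := fun u => 1 / w u + (m+1) * u^m)
      (s := Ioo (-((N:ℝ)+1)) 1) isOpen_Ioo ?_ ?_ (fun x hx => hw x hx.2.le)
      ⟨by linarith, hu⟩
    · rw [Metric.tendstoUniformlyOn_iff]
      intro ε hε
      set δ := 1 / (2 * ((m:ℝ)+1) * (2- -((N:ℝ)+1))^m) with hδ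
      have hδ0 : 0 < δ := hBpos _ (by linarith)
      have hBδ : ∀ x ∈ Ioo (-((N:ℝ)+1)) 1, δ ≤ 1 / (2 * (m+1) * (2-x)^m) := by
        intro x hx
        have : 0 < 2 - x := by linarith [hx.2]
        apply one_div_le_one_div_of_le (by positivity)
        have : 2 - x ≤ 2 - -((N:ℝ)+1) := by linarith [hx.1]
        gcongr
      have ht : ∀ᶠ n : ℕ in atTop, 1 / ((n:ℝ)+1) < ε * δ^2 :=
        (tendsto_one_div_add_atTop_nhds_zero_nat).eventually_lt_const (by positivity)
      filter_upwards [eventually_ge_atTop N, ht] with n hn hn2 x hx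
      have hn' : (N:ℝ) ≤ n := by exact_mod_cast hn
      have hx' : x ∈ Icc (-((n:ℝ)+1)) 1 := ⟨by linarith [hx.1], hx.2.le⟩
      have b1 : δ ≤ w x := (hBδ x hx).trans (hwlow x hx.2.le)
      have b2 : δ ≤ W n x := (hBδ x hx).trans (hlow n x hx')
      have b3 : 0 < w x := by linarith
      have b4 : 0 < W n x := by linarith
      have e : (1 / w x + (m+1) * x^m) - (1 / W n x + (m+1) * x^m) = -(w x - W n x) / (w x * W n x) := by
        field_simp; ring
      rw [Real.dist_eq, e, abs_div, abs_neg, abs_of_pos (mul_pos b3 b4), div_lt_iff₀ (mul_pos b3 b4)]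
      have b5 : δ^2 ≤ w x * W n x := by nlinarith
      have := hclose n x hx'
      nlinarith
    · filter_upwards [eventually_ge_atTop N] with n hn x hx
      have hn' : (N:ℝ) ≤ n := by exact_mod_cast hn
      have hx' : x ∈ Icc (-((n:ℝ)+1)) 1 := ⟨by linarith [hx.1], hx.2.le⟩
      exact (hW n x hx').hasDerivAt (Icc_mem_nhds (by linarith [hx.1]) hx.2)
  · intro u hu
    refine le_of_tendsto (hw u (by linarith)) ?_
    filter_upwards [hev u] with n hn
    exact hup n u ⟨hn, hu⟩
  · intro u hu
    refine ge_of_tendsto (hw u (by linarith)) ?_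
    filter_upwards [hev u] with n hn
    exact hasy n u ⟨hn, hu⟩

lemma ne_zero_of_sol (m : ℕ) (v : ℝ → ℝ)
    (hv : ∀ u ≤ 0, HasDerivAt v (1 / v u + (m+1) * u^m) u) (c : ℝ) (hc : c ≤ 0) : v c ≠ 0 := by
  intro h0
  have hcont : ContinuousAt (fun u => 2 * ((m+1) * u^m) * v u) c :=
    ContinuousAt.mul (by fun_prop) (hv c hc).continuousAt
  have hev : ∀ᶠ u in 𝓝 c, |2 * ((m+1) * u^m) * v u| < 1 := by
    have := hcont.abs
    refine this.eventually_lt_const ?_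
    simp [h0]
  obtain ⟨δ, hδ, hball⟩ := Metric.eventually_nhds_iff.1 hev
  have hsq : ∀ x ≤ 0, HasDerivAt (fun u => (v u)^2) (2 * v x * (1 / v x + (m+1) * x^m)) x := by
    intro x hx
    refine ((hv x hx).pow 2).congr_deriv ?_
    simp
  set a := c - δ/2 with ha
  have hmono : MonotoneOn (fun u => (v u)^2) (Icc a c) := by
    refine monotoneOn_of_hasDerivWithinAt_nonneg (convex_Icc a c)
      (fun x hx => (hsq x (hx.2.trans hc)).continuousAt.continuousWithinAt)
      (fun x hx => (hsq x ((interior_subset hx).2.trans hc)).hasDerivWithinAt) ?_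
    intro x hx
    have hx' := interior_subset hx
    by_cases hz : v x = 0
    · simp [hz]
    · have : |2 * ((m+1) * x^m) * v x| < 1 := by
        apply hball
        rw [Real.dist_eq, abs_lt]
        constructor <;> linarith [hx'.1, hx'.2]
      have e : 2 * v x * (1 / v x + (m+1) * x^m) = 2 + 2 * ((m+1) * x^m) * v x := by
        field_simp
      rw [e]
      linarith [(abs_lt.1 this).1]
  have hzero : ∀ x ∈ Icc a c, v x = 0 := by
    intro x hx
    have := hmono hx ⟨by linarith, le_rfl⟩ hx.2
    simp only [h0] at this
    nlinarith [sq_nonneg (v x)]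
  set b := c - δ/4 with hb
  have hb0 : b < 0 := by linarith
  have hd := hv b hb0.le
  have hd2 : HasDerivAt v 0 b := by
    refine (hasDerivAt_const b (0:ℝ)).congr_of_eventuallyEq ?_
    filter_upwards [Icc_mem_nhds (show a < b by linarith) (show b < c by linarith)] with x hx
    exact hzero x hx
  have := hd.unique hd2
  rw [hzero b ⟨by linarith, by linarith⟩] at this
  have h3 : (m+1) * b^m = 0 := by simpa using this
  have : ((m:ℝ)+1) * b^m ≠ 0 := mul_ne_zero (by positivity) (pow_ne_zero _ hb0.ne)
  exact this h3

lemma pos_of_sol (m : ℕ) (hm : Odd m) (v : ℝ → ℝ)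
    (hv : ∀ u ≤ 0, HasDerivAt v (1 / v u + (m+1) * u^m) u) (c : ℝ) (hc : c ≤ 0) : 0 < v c := by
  by_contra hneg
  have hne := ne_zero_of_sol m v hv
  have hcneg : v c < 0 := lt_of_le_of_ne (not_lt.1 hneg) (hne c hc)
  have hall : ∀ u ≤ c, v u < 0 := by
    intro u hu
    by_contra hpos
    have hco : ContinuousOn v (Icc u c) :=
      fun x hx => (hv x (hx.2.trans hc)).continuousAt.continuousWithinAt
    obtain ⟨z, hz, hz0⟩ := intermediate_value_Icc' hu hco ⟨hcneg.le, not_lt.1 hpos⟩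
    exact hne z (hz.2.trans hc) hz0
  set a := min c (-1) with ha
  have hac : a ≤ c := min_le_left _ _
  have ha1 : a ≤ -1 := min_le_right _ _
  have hd : ∀ x ≤ a, HasDerivAt (fun u => v u + u) (1 / v x + (m+1) * x^m + 1) x := by
    intro x hx
    exact (hv x (by linarith)).add (hasDerivAt_id x)
  have hanti : AntitoneOn (fun u => v u + u) (Iic a) := by
    refine antitoneOn_of_hasDerivWithinAt_nonpos (convex_Iic a)
      (fun x hx => (hd x hx).continuousAt.continuousWithinAt)
      (fun x hx => (hd x (mem_Iic.1 (interior_subset hx))).hasDerivWithinAt) ?_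
    intro x hx
    have hx' : x ≤ a := mem_Iic.1 (interior_subset hx)
    have h1 : 1 / v x < 0 := one_div_neg.2 (hall x (by linarith))
    have h2 : x^m ≤ -1 := by
      have : 1 ≤ (-x)^m := one_le_pow₀ (by linarith)
      rw [hm.neg_pow] at this
      linarith
    have h3 : (0:ℝ) ≤ m := by positivity
    nlinarith
  have hva := hall a hac
  have := hanti (show a + v a ∈ Iic a by simp only [mem_Iic]; linarith) (show a ∈ Iic a by simp)
    (by linarith)
  simp only at this
  have h2 := hall (a + v a) (by linarith)
  linarith

lemma uniq_of_sol (m : ℕ) (hm : Odd m) (v w : ℝ → ℝ)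
    (hv : ∀ u ≤ 0, HasDerivAt v (1 / v u + (m+1) * u^m) u)
    (hw : ∀ u ≤ 0, HasDerivAt w (1 / w u + (m+1) * u^m) u)
    (hv0 : Tendsto v atBot (𝓝 0)) (hw0 : Tendsto w atBot (𝓝 0)) :
    ∀ u ≤ 0, v u = w u := by
  intro u hu
  have h1 : Tendsto (fun a => |v a - w a|) atBot (𝓝 0) := by
    simpa using (hv0.sub hw0).abs
  have h2 : |v u - w u| ≤ 0 := by
    refine ge_of_tendsto h1 ?_
    filter_upwards [eventually_le_atBot u] with a ha
    exact contr (fun u => (m+1) * u^m) v w a u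
      (fun x hx => (hv x (hx.2.trans hu)).hasDerivWithinAt)
      (fun x hx => (hw x (hx.2.trans hu)).hasDerivWithinAt)
      (fun x hx => pos_of_sol m hm v hv x (hx.2.trans hu))
      (fun x hx => pos_of_sol m hm w hw x (hx.2.trans hu)) u ⟨ha, le_rfl⟩
  have := abs_nonpos_iff.1 h2
  linarith

theorem stmt7 (p : ℕ) (hp : 2 ≤ p) (hpe : Even p) :
    ∃ (K : ℝ) (η : ℝ → ℝ), 1/(p:ℝ) < K ∧
      (∀ u ≤ (0:ℝ), HasDerivAt η (1 / (η u + u ^ p)) u) ∧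
      (∀ u < (0:ℝ), -u ^ p < η u ∧ η u < -u ^ p - K / u ^ (p-1)) ∧
      (∃ C R : ℝ, 0 < C ∧ 0 < R ∧ ∀ u ≤ -R,
        |η u - (-u ^ p - (1/(p:ℝ)) * u ^ (1 - (p:ℤ)))| ≤ C * |u| ^ (2 - 3*(p:ℤ))) ∧
      (∀ η' : ℝ → ℝ, (∀ u ≤ (0:ℝ), HasDerivAt η' (1 / (η' u + u ^ p)) u) →
        Filter.Tendsto (fun u => η' u + u ^ p) Filter.atBot (nhds 0) →
        ∀ u ≤ (0:ℝ), η' u = η u) := by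
  obtain ⟨m, rfl⟩ : ∃ m, p = m + 1 := ⟨p - 1, by omega⟩
  have hm : Odd m := by
    rcases Nat.even_or_odd m with h | h
    · exact absurd hpe (by simpa [Nat.even_add_one] using h)
    · exact h
  have hm1 : (1:ℝ) ≤ m := by exact_mod_cast hm.pos
  obtain ⟨w, hw, hpos, hup, hlow⟩ := exists_sol m hm
  have hpow : ∀ u : ℝ, u^m = - (0-u)^m := by
    intro u; rw [zero_sub, hm.neg_pow]; ring
  have hpd : ∀ u : ℝ, HasDerivAt (fun u : ℝ => u^(m+1)) ((m+1) * u^m) u := by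
    intro u
    simpa using hasDerivAt_pow (m+1) u
  have hw0 : Tendsto w atBot (𝓝 0) := by
    have h1 : Tendsto (fun u : ℝ => (-u)⁻¹) atBot (𝓝 0) :=
      tendsto_inv_atTop_zero.comp tendsto_neg_atBot_atTop
    refine squeeze_zero' ?_ ?_ h1
    · filter_upwards [eventually_le_atBot 0] with u hu
      exact (hpos u (by linarith)).le
    · filter_upwards [eventually_le_atBot (-1)] with u hu
      have := (hup u (by linarith)).trans (phi_le m hm (0-u) (by linarith))
      simpa using this
  refine ⟨1, fun u => w u - u^(m+1), ?_, ?_, ?_, ⟨1, 1, one_pos, one_pos, ?_⟩, ?_⟩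
  · rw [div_lt_one (by positivity)]
    push_cast; linarith
  · intro u hu
    refine ((hw u (by linarith)).sub (hpd u)).congr_deriv ?_
    simp
  · intro u hu
    have hs : 0 < 0 - u := by linarith
    refine ⟨by linarith [hpos u (by linarith)], ?_⟩
    have h1 := hup u hu
    have h2 : 1 / (((m:ℝ)+1) * (0-u)^m) < 1 / (0-u)^m := by
      apply one_div_lt_one_div_of_lt (by positivity)
      have : 0 < (0-u)^m := by positivity
      nlinarith
    rw [Nat.add_sub_cancel, hpow u, div_neg]
    linarith
  · intro u hu
    have hs : 1 ≤ 0 - u := by linarith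
    have habs : |u| = 0 - u := by rw [abs_of_neg (by linarith)]; ring
    have z1 : (1 - ((m+1 : ℕ):ℤ)) = -((m:ℕ):ℤ) := by push_cast; ring
    have z2 : (2 - 3 * ((m+1 : ℕ):ℤ)) = -((3*m+1:ℕ):ℤ) := by push_cast; ring
    rw [z1, z2, zpow_neg, zpow_neg, zpow_natCast, zpow_natCast, habs, hpow u, inv_neg]
    have h1 := hup u (by linarith)
    have h2 := hlow u hu
    have e : w u - u^(m+1) - (-u^(m+1) - 1 / ((m+1:ℕ):ℝ) * -((0-u)^m)⁻¹)
        = w u - 1 / ((m+1) * (0-u)^m) := by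
      push_cast
      rw [one_div_mul_eq_div, one_div, mul_inv]
      ring
    rw [e, one_mul]
    have h3 : 1 / (((m:ℝ)+1) * (0-u)^(3*m+1)) ≤ ((0-u)^(3*m+1))⁻¹ := by
      rw [← one_div]
      apply one_div_le_one_div_of_le (by positivity)
      have : 0 < (0-u)^(3*m+1) := by positivity
      nlinarith
    have h4 : 0 ≤ ((0-u)^(3*m+1))⁻¹ := by positivity
    rw [abs_le]; constructor <;> linarith
  · intro η' hη hη0 u hu
    have := uniq_of_sol m hm (fun u => η' u + u^(m+1)) w
      (fun x hx => (hη x hx).add (hpd x)) (fun x hx => hw x (by linarith)) hη0 hw0 u hu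
    linarith
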